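/- arXiv:1702.07868 — 2 statements merged into one kernel-verified Lean document; each statement's English description precedes it below -/
import Mathlib

section
/- Assume c > 0. If (x, y) satisfies x² + y² ≤ R², y ≠ 0 and X(x, y) = 0, then x = x_s* := (R² + r₀²)/(2r₀) − (c/(2r₀))·(1 − r₀²/R²), y² = (1/4)·(2(c² + R⁴)/R² − (c − R²)²/r₀² − (c + R²)²·r₀²/R⁴), and moreover x² + y² = R², so every critical point of X off the horizontal axis lies on the boundary circle of the disk of radius R. -/
/-!
Write `A` and `B` for the squared distances from `(x, y)` to the vortices `(p, 0)` and `(q, 0)`,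
where `p = r₀` and `q = R² / r₀`. Off the axis, the first component of the field gives
`c (1 / A - 1 / B) = 1`; substituting this into the second component leaves `p / A = q / B`.
The latter equation describes an Apollonius circle of the two vortices, `x² + y² = p q`, which is
the boundary circle because the vortices are mirror images in it. On this circle `A` and `B` are
`p` and `q` times the common factor `p + q - 2 x`, so the former equation becomes linear in `x`.
-/

/-- The squared distance from `(x, y)` to the point `(p, 0)` of the horizontal axis. -/
def axisSqDist (p x y : ℝ) : ℝ := (x - p) ^ 2 + y ^ 2

/-- The velocity field of opposite point vortices, of strength `-c * θ` at `(p, 0)` and `c * θ` at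
`(q, 0)`, superposed with the rigid rotation of angular velocity `θ`. The vortex field of the disk
of radius `R` is the case `p = r₀`, `q = R ^ 2 / r₀`. The values at the two vortices are junk. -/
noncomputable def vortexPairField (θ c p q x y : ℝ) : ℝ × ℝ :=
  (-θ * y + c * θ * y * (1 / axisSqDist p x y - 1 / axisSqDist q x y),
    θ * x - c * θ * ((x - p) / axisSqDist p x y - (x - q) / axisSqDist q x y))

section VortexPair

variable {θ c p q x y : ℝ}

theorem axisSqDist_pos (p x : ℝ) (hy : y ≠ 0) : 0 < axisSqDist p x y :=
  add_pos_of_nonneg_of_pos (sq_nonneg _) (sq_pos_of_ne_zero hy)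

theorem axisSqDist_eq_mul_of_sq_add_sq_eq (h : x ^ 2 + y ^ 2 = p * q) :
    axisSqDist p x y = p * (p + q - 2 * x) := by
  unfold axisSqDist
  linear_combination h

theorem mul_axisSqDist_eq_mul_axisSqDist_iff (hpq : p ≠ q) :
    p * axisSqDist q x y = q * axisSqDist p x y ↔ x ^ 2 + y ^ 2 = p * q := by
  have hfactor : p * axisSqDist q x y - q * axisSqDist p x y
      = (p - q) * (x ^ 2 + y ^ 2 - p * q) := by
    unfold axisSqDist
    ring
  rw [← sub_eq_zero, hfactor, mul_eq_zero_iff_left (sub_ne_zero.mpr hpq), sub_eq_zero]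

theorem vortexPairField_eq_zero_iff (hθ : θ ≠ 0) (hy : y ≠ 0) :
    vortexPairField θ c p q x y = 0 ↔
      c * (1 / axisSqDist p x y - 1 / axisSqDist q x y) = 1 ∧
        p / axisSqDist p x y = q / axisSqDist q x y := by
  simp only [vortexPairField, Prod.mk_eq_zero]
  constructor
  · rintro ⟨hfst, hsnd⟩
    have hstrength : c * (1 / axisSqDist p x y - 1 / axisSqDist q x y) = 1 :=
      mul_left_cancel₀ (mul_ne_zero hθ hy) (by linear_combination hfst)
    have hc : c ≠ 0 := left_ne_zero_of_mul_eq_one hstrength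
    exact ⟨hstrength, mul_left_cancel₀ (mul_ne_zero hθ hc)
      (by linear_combination hsnd + θ * x * hstrength)⟩
  · rintro ⟨hstrength, hratio⟩
    exact ⟨by linear_combination θ * y * hstrength,
      by linear_combination θ * c * hratio - θ * x * hstrength⟩

theorem sq_add_sq_eq_mul_of_vortexPairField_eq_zero (hθ : θ ≠ 0) (hy : y ≠ 0)
    (hcrit : vortexPairField θ c p q x y = 0) : x ^ 2 + y ^ 2 = p * q := by
  obtain ⟨hstrength, hratio⟩ := (vortexPairField_eq_zero_iff hθ hy).mp hcrit
  have hpq : p ≠ q := by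
    rintro rfl
    simp at hstrength
  rw [← mul_axisSqDist_eq_mul_axisSqDist_iff hpq]
  exact (div_eq_div_iff (axisSqDist_pos p x hy).ne' (axisSqDist_pos q x hy).ne').mp hratio

theorem mul_sub_eq_of_vortexPairField_eq_zero (hθ : θ ≠ 0) (hy : y ≠ 0)
    (hcrit : vortexPairField θ c p q x y = 0) :
    c * (q - p) = p * q * (p + q - 2 * x) := by
  have hcircle := sq_add_sq_eq_mul_of_vortexPairField_eq_zero hθ hy hcrit
  have hp := axisSqDist_eq_mul_of_sq_add_sq_eq hcircle
  have hq : axisSqDist q x y = q * (p + q - 2 * x) := by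
    rw [axisSqDist_eq_mul_of_sq_add_sq_eq (hcircle.trans (mul_comm p q)), add_comm q p]
  have hp_ne := hp ▸ (axisSqDist_pos p x hy).ne'
  have hq_ne := hq ▸ (axisSqDist_pos q x hy).ne'
  obtain ⟨hp₀, hfactor⟩ := mul_ne_zero_iff.mp hp_ne
  have hq₀ : q ≠ 0 := left_ne_zero_of_mul hq_ne
  have hstrength := ((vortexPairField_eq_zero_iff hθ hy).mp hcrit).1
  rw [hp, hq] at hstrength
  field_simp at hstrength
  linear_combination hstrength

end VortexPair

theorem offaxis_critical_points_on_boundary_of_c_pos_general {R r₀ θ₀ c x y : ℝ}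
    (hθ : θ₀ ≠ 0) (hr₀ : r₀ ≠ 0) (hy : y ≠ 0)
    (hcrit : vortexPairField θ₀ c r₀ (R ^ 2 / r₀) x y = 0) :
    x = (R ^ 2 + r₀ ^ 2) / (2 * r₀) - (c / (2 * r₀)) * (1 - r₀ ^ 2 / R ^ 2) ∧
    y ^ 2 = (1 / 4) * (2 * (c ^ 2 + R ^ 4) / R ^ 2 - (c - R ^ 2) ^ 2 / r₀ ^ 2 -
      (c + R ^ 2) ^ 2 * r₀ ^ 2 / R ^ 4) ∧
    x ^ 2 + y ^ 2 = R ^ 2 := by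
  have hcircle : x ^ 2 + y ^ 2 = R ^ 2 :=
    (sq_add_sq_eq_mul_of_vortexPairField_eq_zero hθ hy hcrit).trans (mul_div_cancel₀ _ hr₀)
  have hR : R ≠ 0 := by
    have hR_sq : 0 < R ^ 2 := hcircle ▸ by positivity
    exact (pow_ne_zero_iff two_ne_zero).mp hR_sq.ne'
  have hx : x = (R ^ 2 + r₀ ^ 2) / (2 * r₀) - (c / (2 * r₀)) * (1 - r₀ ^ 2 / R ^ 2) := by
    have hlinear := mul_sub_eq_of_vortexPairField_eq_zero hθ hy hcrit
    field_simp at hlinear ⊢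
    linear_combination hlinear
  refine ⟨hx, ?_, hcircle⟩
  rw [eq_sub_of_add_eq' hcircle, hx]
  field_simp
  ring

/-- if `c > 0`, every critical point of `X` in the closed disk `D_R`
lying off the horizontal axis has the explicit coordinates `(x_s*, ±y_s*)` and lies
on the boundary circle. -/
theorem offaxis_critical_points_on_boundary_of_c_pos
    (R r₀ θ₀ Γ : ℝ)
    (hR : 0 < R) (hr₀ : 0 < r₀) (hrR : r₀ < R) (hθ : θ₀ ≠ 0) (hΓ : Γ ≠ 0)
    (c : ℝ) (hc : c = Γ / (2 * Real.pi * θ₀)) (hcpos : 0 < c)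
    (X : ℝ → ℝ → ℝ × ℝ)
    (hX : ∀ x y : ℝ, X x y =
      (-θ₀ * y + c * θ₀ * y *
          (1 / ((x - r₀) ^ 2 + y ^ 2) - 1 / ((x - R ^ 2 / r₀) ^ 2 + y ^ 2)),
       θ₀ * x - c * θ₀ *
          ((x - r₀) / ((x - r₀) ^ 2 + y ^ 2) -
            (x - R ^ 2 / r₀) / ((x - R ^ 2 / r₀) ^ 2 + y ^ 2))))
    (x y : ℝ) (hdisk : x ^ 2 + y ^ 2 ≤ R ^ 2) (hy : y ≠ 0)
    (hcrit : X x y = (0, 0)) :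
    x = (R ^ 2 + r₀ ^ 2) / (2 * r₀) - (c / (2 * r₀)) * (1 - r₀ ^ 2 / R ^ 2) ∧
    y ^ 2 = (1 / 4) * (2 * (c ^ 2 + R ^ 4) / R ^ 2 - (c - R ^ 2) ^ 2 / r₀ ^ 2 -
      (c + R ^ 2) ^ 2 * r₀ ^ 2 / R ^ 4) ∧
    x ^ 2 + y ^ 2 = R ^ 2 :=
  offaxis_critical_points_on_boundary_of_c_pos_general hθ hr₀.ne' hy ((hX x y).symm.trans hcrit)
end

section
/- Assume either (i) φ₀ > 0 and 0 < ρ₀ < (1 − φ₀)/(1 + φ₀), or (ii) φ₀ < 0 and f(ρ₀, φ₀) < 0. Then the vector field X has no critical points in the closed disk D_R of radius R centered at the origin; that is, X(x, y) ≠ 0 for every (x, y) ∈ D_R with (x, y) ≠ (r₀, 0). (Cases (a) and (e) of Theorem 1: the dynamics in D_R is a global vortex around (r₀, 0).) -/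
/-!
In complex notation the vortex field is
`X = iθ₀ (z - c (1 / conj (z - r₀) - 1 / conj (z - R²/r₀)))`. After rescaling `w = z / R`,
`p = r₀ / R`, its zeros in the disk are the solutions of `φ₀ S(w) = 1 - |p|²` with
`S(w) = conj w (w - p) (1 - conj p w)`. On the closed unit disk `|S|` is at most `(1 + |p|)²`, which
settles `φ₀ > 0`. For `φ₀ < 0` only the real part matters: among points with `|w| = s` fixed, `Re S`
is smallest in the direction of `p`, where it equals the cubic `s (s - |p|) (1 - |p| s)`, and `f`
compares `(1 - |p|²) / φ₀` with the local minimum of this cubic.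
-/

open scoped ComplexConjugate

/-- The velocity at `z`, in a rotating frame, of the flow generated by two opposite point vortices
at `a` and `b`; the plane is identified with `ℂ`. The parameter `c` measures the strength of the
vortices relative to the rotation rate `θ`. At `z = a` and `z = b` the singular term is replaced by
`0`. -/
noncomputable def vortexField (θ c : ℝ) (a b z : ℂ) : ℂ :=
  θ * Complex.I * (z - c * ((conj (z - a))⁻¹ - (conj (z - b))⁻¹))

/-- The function `S` whose level set `φ S = 1 - |p|²`, `φ = 1 / c`, consists of the critical points
`w` of the vortex field in the unit disk with vortex at `p` and image vortex at `1 / conj p`. -/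
noncomputable def stagnationFunction (p w : ℂ) : ℂ :=
  conj w * (w - p) * (1 - conj p * w)

section VortexField

variable {θ c : ℝ}

lemma vortexField_ofReal_re (a b x y : ℝ) :
    (vortexField θ c a b ⟨x, y⟩).re =
      -θ * y + c * θ * y * (1 / ((x - a) ^ 2 + y ^ 2) - 1 / ((x - b) ^ 2 + y ^ 2)) := by
  simp only [vortexField, map_sub, Complex.conj_ofReal, Complex.normSq_apply, Complex.mul_re,
    Complex.mul_im, Complex.sub_re, Complex.sub_im, Complex.inv_re, Complex.inv_im, Complex.conj_re,
    Complex.conj_im, Complex.ofReal_re, Complex.ofReal_im, Complex.I_re, Complex.I_im]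
  ring

lemma vortexField_ofReal_im (a b x y : ℝ) :
    (vortexField θ c a b ⟨x, y⟩).im =
      θ * x - c * θ *
        ((x - a) / ((x - a) ^ 2 + y ^ 2) - (x - b) / ((x - b) ^ 2 + y ^ 2)) := by
  simp only [vortexField, map_sub, Complex.conj_ofReal, Complex.normSq_apply, Complex.mul_re,
    Complex.mul_im, Complex.sub_re, Complex.sub_im, Complex.inv_re, Complex.inv_im, Complex.conj_re,
    Complex.conj_im, Complex.ofReal_re, Complex.ofReal_im, Complex.I_re, Complex.I_im]
  ring

lemma vortexField_eq_zero_iff {a b z : ℂ} (hθ : θ ≠ 0) (hza : z ≠ a) (hzb : z ≠ b) :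
    vortexField θ c a b z = 0 ↔ conj z * (z - a) * (z - b) = c * (a - b) := by
  have ha : z - a ≠ 0 := sub_ne_zero.2 hza
  have hb : z - b ≠ 0 := sub_ne_zero.2 hzb
  calc vortexField θ c a b z = 0
      ↔ z = c * ((conj (z - a))⁻¹ - (conj (z - b))⁻¹) := by
        simp [vortexField, hθ, sub_eq_zero]
    _ ↔ conj z = c * ((z - a)⁻¹ - (z - b)⁻¹) := by
        rw [← (starRingEnd ℂ).injective.eq_iff]
        simp only [map_mul, map_sub, map_inv₀, Complex.conj_conj, Complex.conj_ofReal]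
    _ ↔ conj z * (z - a) * (z - b) = c * (a - b) := by
        field_simp
        ring_nf

lemma mul_stagnationFunction_eq_of_vortexField_eq_zero {R : ℝ} {a z : ℂ} (hθ : θ ≠ 0) (hc : c ≠ 0)
    (ha : a ≠ 0) (haR : ‖a‖ < R) (hzR : ‖z‖ ≤ R) (hza : z ≠ a)
    (hz : vortexField θ c a (R ^ 2 / conj a) z = 0) :
    ((R ^ 2 / c : ℝ) : ℂ) * stagnationFunction (a / R) (z / R) = 1 - ‖a / R‖ ^ 2 := by
  have hR : 0 < R := (norm_nonneg a).trans_lt haR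
  have hRc : (R : ℂ) ≠ 0 := mod_cast hR.ne'
  have hcc : (c : ℂ) ≠ 0 := mod_cast hc
  have conj_ne_zero : conj a ≠ 0 := by simpa using ha
  have image_outside : R < ‖(R : ℂ) ^ 2 / conj a‖ := by
    rw [norm_div, norm_pow, RCLike.norm_conj, Complex.norm_of_nonneg hR.le,
      lt_div_iff₀ (norm_pos_iff.2 ha), sq]
    exact mul_lt_mul_of_pos_left haR hR
  have hzb : z ≠ R ^ 2 / conj a := fun h => (hzR.trans_lt image_outside).ne (congrArg norm h)
  have key := (vortexField_eq_zero_iff hθ hza hzb).1 hz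
  rw [← Complex.mul_conj', stagnationFunction]
  simp only [map_div₀, Complex.conj_ofReal]
  push_cast
  field_simp at key ⊢
  linear_combination -key

end VortexField

section StagnationFunction

variable {p w : ℂ}

lemma norm_stagnationFunction_le (hw : ‖w‖ ≤ 1) : ‖stagnationFunction p w‖ ≤ (1 + ‖p‖) ^ 2 := by
  have h₁ : ‖w - p‖ ≤ 1 + ‖p‖ := (norm_sub_le w p).trans (by gcongr)
  have h₂ : ‖1 - conj p * w‖ ≤ 1 + ‖p‖ := by
    refine (norm_sub_le _ _).trans ?_
    rw [norm_one, norm_mul, RCLike.norm_conj]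
    gcongr
    exact mul_le_of_le_one_right (norm_nonneg p) hw
  calc ‖stagnationFunction p w‖ = ‖w‖ * ‖w - p‖ * ‖1 - conj p * w‖ := by
        rw [stagnationFunction, norm_mul, norm_mul, RCLike.norm_conj]
    _ ≤ 1 * (1 + ‖p‖) * (1 + ‖p‖) := by gcongr
    _ = (1 + ‖p‖) ^ 2 := by ring

lemma stagnationFunction_re (p w : ℂ) :
    (stagnationFunction p w).re =
      ‖w‖ ^ 2 * (1 + ‖p‖ ^ 2) - (1 + ‖w‖ ^ 2) * (conj p * w).re := by
  simp only [stagnationFunction, Complex.sq_norm, Complex.normSq_apply, Complex.mul_re,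
    Complex.mul_im, Complex.sub_re, Complex.sub_im, Complex.conj_re, Complex.conj_im,
    Complex.one_re, Complex.one_im]
  ring

lemma le_re_stagnationFunction (p w : ℂ) :
    ‖w‖ * (‖w‖ - ‖p‖) * (1 - ‖p‖ * ‖w‖) ≤ (stagnationFunction p w).re := by
  have cauchy_schwarz : (conj p * w).re ≤ ‖p‖ * ‖w‖ := by
    simpa only [norm_mul, RCLike.norm_conj] using Complex.re_le_norm (conj p * w)
  calc ‖w‖ * (‖w‖ - ‖p‖) * (1 - ‖p‖ * ‖w‖)
      = ‖w‖ ^ 2 * (1 + ‖p‖ ^ 2) - (1 + ‖w‖ ^ 2) * (‖p‖ * ‖w‖) := by ring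
    _ ≤ ‖w‖ ^ 2 * (1 + ‖p‖ ^ 2) - (1 + ‖w‖ ^ 2) * (conj p * w).re := by gcongr
    _ = (stagnationFunction p w).re := (stagnationFunction_re p w).symm

/-- The left-hand side is `27 p²` times the local minimum of the cubic `s (s - p) (1 - p s)`. -/
lemma cubic_local_min_le {p s : ℝ} (hp : 0 ≤ p) (hs : s ≤ 1) :
    2 - 3 * p ^ 2 - 3 * p ^ 4 + 2 * p ^ 6 - 2 * (1 - p ^ 2 + p ^ 4) ^ ((3 : ℝ) / 2) ≤
      27 * p ^ 2 * (s * (s - p) * (1 - p * s)) := by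
  have hp_le : p ^ 2 ≤ 1 - p ^ 2 + p ^ 4 := by linarith [sq_nonneg (1 - p ^ 2)]
  have hD : 0 ≤ 1 - p ^ 2 + p ^ 4 := (sq_nonneg p).trans hp_le
  set q := √(1 - p ^ 2 + p ^ 4) with hq
  have hq_sq : q ^ 2 = 1 - p ^ 2 + p ^ 4 := Real.sq_sqrt hD
  have hq_cube : (1 - p ^ 2 + p ^ 4) ^ ((3 : ℝ) / 2) = q ^ 3 := by
    rw [Real.rpow_div_two_eq_sqrt 3 hD, ← hq, Real.rpow_ofNat]
  have hpq : p ≤ q := Real.le_sqrt_of_sq_le hp_le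
  have hps : p * s ≤ p := mul_le_of_le_one_right hp hs
  -- The double root `s = (1 + p² - q) / (3 p)` is the local minimizer of the cubic.
  have factored : 0 ≤ (1 + p ^ 2 - 3 * p * s + 2 * q) * (1 + p ^ 2 - 3 * p * s - q) ^ 2 :=
    mul_nonneg (by linarith [sq_nonneg (1 - p)]) (sq_nonneg _)
  rw [hq_cube]
  linear_combination factored - 3 * (1 + p ^ 2 - 3 * p * s) * hq_sq

lemma mul_re_stagnationFunction_ne_of_abs_mul_lt {φ : ℝ} (hφ : |φ| * (1 + ‖p‖) < 1 - ‖p‖)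
    (hw : ‖w‖ ≤ 1) : φ * (stagnationFunction p w).re ≠ 1 - ‖p‖ ^ 2 := by
  have re_le : |(stagnationFunction p w).re| ≤ (1 + ‖p‖) ^ 2 :=
    (Complex.abs_re_le_norm _).trans (norm_stagnationFunction_le hw)
  refine ne_of_lt ?_
  calc φ * (stagnationFunction p w).re ≤ |φ| * |(stagnationFunction p w).re| :=
        (le_abs_self _).trans_eq (abs_mul _ _)
    _ ≤ |φ| * (1 + ‖p‖) ^ 2 := by gcongr
    _ = |φ| * (1 + ‖p‖) * (1 + ‖p‖) := by ring
    _ < (1 - ‖p‖) * (1 + ‖p‖) := by gcongr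
    _ = 1 - ‖p‖ ^ 2 := by ring

lemma mul_re_stagnationFunction_ne_of_neg {φ : ℝ} (hφ : φ < 0)
    (hf : 27 * ‖p‖ ^ 2 * (‖p‖ ^ 2 - 1) +
      φ * (2 - 3 * ‖p‖ ^ 2 - 3 * ‖p‖ ^ 4 + 2 * ‖p‖ ^ 6 -
        2 * (1 - ‖p‖ ^ 2 + ‖p‖ ^ 4) ^ ((3 : ℝ) / 2)) < 0)
    (hw : ‖w‖ ≤ 1) : φ * (stagnationFunction p w).re ≠ 1 - ‖p‖ ^ 2 := by
  intro h
  refine hf.not_ge ?_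
  have min_le : 2 - 3 * ‖p‖ ^ 2 - 3 * ‖p‖ ^ 4 + 2 * ‖p‖ ^ 6 -
      2 * (1 - ‖p‖ ^ 2 + ‖p‖ ^ 4) ^ ((3 : ℝ) / 2) ≤
        27 * ‖p‖ ^ 2 * (stagnationFunction p w).re :=
    (cubic_local_min_le (norm_nonneg p) hw).trans
      (mul_le_mul_of_nonneg_left (le_re_stagnationFunction p w) (by positivity))
  have scaled_min_le := mul_le_mul_of_nonpos_left min_le hφ.le
  linear_combination scaled_min_le - 27 * ‖p‖ ^ 2 * h

end StagnationFunction

/-- cases (a) and (e) of Theorem 1: if either `φ₀ > 0` with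
`0 < ρ₀ < (1 − φ₀)/(1 + φ₀)`, or `φ₀ < 0` with `f(ρ₀, φ₀) < 0`, then `X` has no
critical points in the closed disk `D_R`: the dynamics is a global vortex around
`(r₀, 0)`. -/
theorem global_vortex_no_critical_points
    (R r₀ θ₀ Γ : ℝ)
    (hR : 0 < R) (hr₀ : 0 < r₀) (hrR : r₀ < R) (hθ : θ₀ ≠ 0) (hΓ : Γ ≠ 0)
    (c ρ₀ φ₀ : ℝ) (hc : c = Γ / (2 * Real.pi * θ₀))
    (hρ : ρ₀ = r₀ / R) (hφ : φ₀ = R ^ 2 / c)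
    (fval : ℝ)
    (hf : fval = 27 * ρ₀ ^ 2 * (ρ₀ ^ 2 - 1) +
      φ₀ * (2 - 3 * ρ₀ ^ 2 - 3 * ρ₀ ^ 4 + 2 * ρ₀ ^ 6 -
        2 * (1 - ρ₀ ^ 2 + ρ₀ ^ 4) ^ ((3 : ℝ) / 2)))
    (hregion : (0 < φ₀ ∧ 0 < ρ₀ ∧ ρ₀ < (1 - φ₀) / (1 + φ₀)) ∨ (φ₀ < 0 ∧ fval < 0))
    (X : ℝ → ℝ → ℝ × ℝ)
    (hX : ∀ x y : ℝ, X x y =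
      (-θ₀ * y + c * θ₀ * y *
          (1 / ((x - r₀) ^ 2 + y ^ 2) - 1 / ((x - R ^ 2 / r₀) ^ 2 + y ^ 2)),
       θ₀ * x - c * θ₀ *
          ((x - r₀) / ((x - r₀) ^ 2 + y ^ 2) -
            (x - R ^ 2 / r₀) / ((x - R ^ 2 / r₀) ^ 2 + y ^ 2)))) :
    ∀ x y : ℝ, x ^ 2 + y ^ 2 ≤ R ^ 2 → (x, y) ≠ (r₀, 0) → X x y ≠ (0, 0) := by
  intro x y hxy hne hX0
  have hφ₀ : φ₀ ≠ 0 := hregion.elim (fun h => h.1.ne') (fun h => h.1.ne)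
  have hc₀ : c ≠ 0 := by rintro rfl; exact hφ₀ (by simp [hφ])
  have hz : vortexField θ₀ c r₀ (R ^ 2 / conj (r₀ : ℂ)) ⟨x, y⟩ = 0 := by
    rw [hX, Prod.mk.injEq, ← vortexField_ofReal_re, ← vortexField_ofReal_im] at hX0
    simpa using (Complex.ext hX0.1 hX0.2 : vortexField θ₀ c r₀ (R ^ 2 / r₀ : ℝ) ⟨x, y⟩ = 0)
  have hzR : ‖(⟨x, y⟩ : ℂ)‖ ≤ R :=
    (Complex.norm_eq_sqrt_sq_add_sq _).trans_le (Real.sqrt_le_iff.2 ⟨hR.le, hxy⟩)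
  have hza : (⟨x, y⟩ : ℂ) ≠ r₀ := fun h => hne (Prod.ext_iff.2 (Complex.ext_iff.1 h))
  have hw : ‖(⟨x, y⟩ : ℂ) / R‖ ≤ 1 := by
    rwa [norm_div, Complex.norm_of_nonneg hR.le, div_le_one hR]
  have hp : ‖(r₀ : ℂ) / R‖ = ρ₀ := by simp [hρ, abs_of_pos hr₀, abs_of_pos hR]
  have hS : φ₀ * (stagnationFunction (r₀ / R) (⟨x, y⟩ / R)).re = 1 - ‖(r₀ : ℂ) / R‖ ^ 2 := by
    rw [hφ, ← Complex.re_ofReal_mul, mul_stagnationFunction_eq_of_vortexField_eq_zero hθ hc₀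
      (mod_cast hr₀.ne') (by rwa [Complex.norm_of_nonneg hr₀.le]) hzR hza hz]
    norm_cast
  rcases hregion with ⟨hpos, -, hlt⟩ | ⟨hneg, hfneg⟩
  · refine mul_re_stagnationFunction_ne_of_abs_mul_lt ?_ hw hS
    rw [lt_div_iff₀ (by linarith)] at hlt
    rw [hp, abs_of_pos hpos]
    linarith
  · exact mul_re_stagnationFunction_ne_of_neg hneg (by rwa [hp, ← hf]) hw hS
end
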